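/- arXiv:1501.03267 — 2 statements merged into one kernel-verified Lean document; each statement's English description precedes it below -/
import Mathlib

section
/- Let p, q, r, s ∈ [1,∞] with r ≤ p, and let M = {m_{jk}} be a matrix such that Schur multiplication by M is bounded from L(ℓ_p, ℓ_q) to L(ℓ_r, ℓ_s). Let M̃ be obtained from M by repeating the first column (M̃_{j1} = m_{j1}, M̃_{jk} = m_{j(k−1)} for k ≥ 2). Then Schur multiplication by M̃ is also bounded from L(ℓ_p, ℓ_q) to L(ℓ_r, ℓ_s), with the same norm as M. -/
open scoped ENNReal

/-- The operator norm of an `n×n` matrix viewed as an operator from `ℓ_p^n` to `ℓ_q^n`. -/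
noncomputable def lpqOpNorm (p q : ℝ≥0∞) [Fact (1 ≤ p)] [Fact (1 ≤ q)] {n : ℕ}
    (A : Matrix (Fin n) (Fin n) ℂ) : ℝ :=
  ‖LinearMap.toContinuousLinearMap
    (((WithLp.linearEquiv q ℂ (∀ _ : Fin n, ℂ)).symm.toLinearMap.comp
      A.mulVecLin).comp
      (WithLp.linearEquiv p ℂ (∀ _ : Fin n, ℂ)).toLinearMap)‖

/-- The matrix `M̃` obtained from `M` by repeating the first column. -/
def colRepeat (M : ℕ → ℕ → ℂ) : ℕ → ℕ → ℂ := fun j k => M j (k - 1)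

/-!
Repeating columns turns `M` into `M.submatrix id f`; here `f k = k - 1`. Given `S` and `x`,
factor `x i = a i * t (f i)` with `t k` the `ℓ^r` norm of `x` on the fiber of `f` over `k`. Then
`(M.submatrix id f ⊙ S) x = (M ⊙ T) t`, where column `k` of `T` is the sum of the columns of `S`
over that fiber with weights `a`. Here `‖t‖_r = ‖x‖_r`, and `r ≤ p` makes the `ℓ^p` norm of `a`
on each fiber at most `1`, so `‖T‖ ≤ ‖S‖`. Conversely, `M` is a column submatrix of
`M.submatrix id f` along any right inverse of `f`, and the rows of a finite section can be cut
down by padding `S` with zeros.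
-/

open Matrix WithLp

section LpNorm

variable {ι κ E F : Type*} [Fintype ι] [SeminormedAddCommGroup E] [SeminormedAddCommGroup F]
  (p : ℝ≥0∞) [Fact (1 ≤ p)]

theorem norm_toLp_le_norm_toLp {x : ι → E} {y : ι → F} (h : ∀ i, ‖x i‖ ≤ ‖y i‖) :
    ‖toLp p x‖ ≤ ‖toLp p y‖ := by
  obtain rfl | hp := p.dichotomy
  · rw [PiLp.norm_toLp, pi_norm_le_iff_of_nonneg (norm_nonneg _)]
    exact fun i => (h i).trans (PiLp.norm_apply_le (toLp ∞ y) i)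
  · have hp₀ : 0 < p.toReal := zero_lt_one.trans_le hp
    simp only [PiLp.norm_eq_sum hp₀]
    gcongr with i
    exact h i

theorem norm_toLp_le_of_exponent_le {r p : ℝ≥0∞} [Fact (1 ≤ r)] [Fact (1 ≤ p)] (hrp : r ≤ p)
    (x : ι → E) : ‖toLp p x‖ ≤ ‖toLp r x‖ := by
  set t := ‖toLp r x‖
  have hxt (i : ι) : ‖x i‖ ≤ t := PiLp.norm_apply_le (toLp r x) i
  obtain rfl | hp := p.dichotomy
  · rwa [PiLp.norm_toLp, pi_norm_le_iff_of_nonneg (norm_nonneg _)]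
  have hp₀ : 0 < p.toReal := zero_lt_one.trans_le hp
  have hp_top : p ≠ ∞ := (ENNReal.toReal_pos_iff_ne_top p).mp hp₀
  have hr₀ : 0 < r.toReal := (ENNReal.toReal_pos_iff_ne_top r).mpr (ne_top_of_le_ne_top hp_top hrp)
  have hd : 0 ≤ p.toReal - r.toReal := sub_nonneg.mpr (ENNReal.toReal_mono hp_top hrp)
  have rpow_split {a : ℝ} (ha : 0 ≤ a) :
      a ^ p.toReal = a ^ r.toReal * a ^ (p.toReal - r.toReal) := by
    rw [← Real.rpow_add_of_nonneg ha hr₀.le hd, add_sub_cancel]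
  have ht : t ^ r.toReal = ∑ i, ‖x i‖ ^ r.toReal := by
    rw [show t = _ from PiLp.norm_eq_sum hr₀ _, one_div,
      Real.rpow_inv_rpow (by positivity) hr₀.ne']
  rw [PiLp.norm_eq_sum hp₀, one_div,
    Real.rpow_inv_le_iff_of_pos (by positivity) (norm_nonneg _) hp₀]
  calc ∑ i, ‖x i‖ ^ p.toReal = ∑ i, ‖x i‖ ^ r.toReal * ‖x i‖ ^ (p.toReal - r.toReal) :=
        Finset.sum_congr rfl fun i _ => rpow_split (norm_nonneg _)
    _ ≤ ∑ i, ‖x i‖ ^ r.toReal * t ^ (p.toReal - r.toReal) := by gcongr with i; exact hxt i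
    _ = t ^ p.toReal := by rw [← Finset.sum_mul, ← ht, ← rpow_split (norm_nonneg _)]

theorem norm_toLp_extend_zero [Fintype κ] {g : ι → κ} (hg : g.Injective) (x : ι → E) :
    ‖toLp p (Function.extend g x 0)‖ = ‖toLp p x‖ := by
  obtain rfl | hp := p.dichotomy
  · refine le_antisymm ?_ ?_ <;>
      rw [PiLp.norm_toLp, pi_norm_le_iff_of_nonneg (norm_nonneg _)]
    · intro k
      by_cases hk : ∃ i, g i = k
      · obtain ⟨i, rfl⟩ := hk
        simpa only [hg.extend_apply] using PiLp.norm_apply_le (toLp ∞ x) i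
      · simp [Function.extend_apply' _ _ _ hk]
    · intro i
      simpa only [hg.extend_apply] using PiLp.norm_apply_le (toLp ∞ (Function.extend g x 0)) (g i)
  · have hp₀ : 0 < p.toReal := zero_lt_one.trans_le hp
    simp only [PiLp.norm_eq_sum hp₀]
    congr 1
    refine (Fintype.sum_of_injective g hg _ _ (fun k hk => ?_) fun i => ?_).symm
    · simp [Function.extend_apply' _ _ _ hk, hp₀.ne']
    · simp [hg.extend_apply]

variable [DecidableEq κ]

/-- The `ℓ^p` norm of the restriction of `x` to the fiber of `f` over `k`. -/
noncomputable def fiberNorm (f : ι → κ) (x : ι → E) (k : κ) : ℝ :=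
  ‖toLp p fun i : {i // f i = k} => x i‖

theorem fiberNorm_nonneg (f : ι → κ) (x : ι → E) (k : κ) : 0 ≤ fiberNorm p f x k := norm_nonneg _

theorem norm_apply_le_fiberNorm (f : ι → κ) (x : ι → E) (i : ι) :
    ‖x i‖ ≤ fiberNorm p f x (f i) :=
  PiLp.norm_apply_le (toLp p fun j : {j // f j = f i} => x j) ⟨i, rfl⟩

theorem norm_toLp_fiberNorm [Fintype κ] (f : ι → κ) (x : ι → E) :
    ‖toLp p (fiberNorm p f x)‖ = ‖toLp p x‖ := by
  obtain rfl | hp := p.dichotomy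
  · refine le_antisymm ?_ ?_ <;> rw [PiLp.norm_toLp, pi_norm_le_iff_of_nonneg (norm_nonneg _)]
    · intro k
      rw [fiberNorm, norm_norm, PiLp.norm_toLp, pi_norm_le_iff_of_nonneg (norm_nonneg _)]
      exact fun i => PiLp.norm_apply_le (toLp ∞ x) i
    · exact fun i => (norm_apply_le_fiberNorm ∞ f x i).trans <| (le_abs_self _).trans <|
        PiLp.norm_apply_le (toLp ∞ (fiberNorm ∞ f x)) (f i)
  · have hp₀ : 0 < p.toReal := zero_lt_one.trans_le hp
    simp only [fiberNorm, PiLp.norm_eq_sum hp₀, one_div]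
    congr 1
    rw [← Fintype.sum_fiberwise f]
    refine Finset.sum_congr rfl fun k _ => ?_
    rw [Real.norm_of_nonneg (by positivity), Real.rpow_inv_rpow (by positivity) hp₀.ne']

theorem fiberNorm_mul_comp {R : Type*} [NormedField R] (f : ι → κ) (x : ι → R) (w : κ → R)
    (k : κ) : fiberNorm p f (fun i => x i * w (f i)) k = fiberNorm p f x k * ‖w k‖ := by
  have h : (fun i : {i // f i = k} => x i * w (f i)) = w k • fun i : {i // f i = k} => x i := by
    ext ⟨i, rfl⟩
    exact mul_comm _ _
  rw [fiberNorm, h, toLp_smul, norm_smul, mul_comm, fiberNorm]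

-- Divide `x` on each fiber by its `ℓ^r` norm there, which dominates its `ℓ^p` norm.
theorem exists_fiberwise_factorization {𝕜 : Type*} [RCLike 𝕜] {r p : ℝ≥0∞} [Fact (1 ≤ r)]
    [Fact (1 ≤ p)] [Fintype κ] (hrp : r ≤ p) (f : ι → κ) (x : ι → 𝕜) :
    ∃ (a : ι → 𝕜) (t : κ → 𝕜), x = (fun i => a i * t (f i)) ∧
      (∀ k, fiberNorm p f a k ≤ 1) ∧ ‖toLp r t‖ ≤ ‖toLp r x‖ := by
  let t (k : κ) : 𝕜 := fiberNorm r f x k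
  have norm_t (k : κ) : ‖t k‖ = fiberNorm r f x k :=
    RCLike.norm_of_nonneg (fiberNorm_nonneg r f x k)
  refine ⟨fun i => x i * (t (f i))⁻¹, t, funext fun i => ?_, fun k => ?_, ?_⟩
  · by_cases hti : t (f i) = 0
    · have : ‖x i‖ ≤ 0 := by simpa [← norm_t, hti] using norm_apply_le_fiberNorm r f x i
      simp [norm_le_zero_iff.mp this]
    · exact (inv_mul_cancel_right₀ hti _).symm
  · calc fiberNorm p f (fun i => x i * (t (f i))⁻¹) k
        ≤ fiberNorm r f (fun i => x i * (t (f i))⁻¹) k := norm_toLp_le_of_exponent_le hrp _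
      _ = ‖t k‖ * ‖t k‖⁻¹ := by rw [fiberNorm_mul_comp r f x (fun k => (t k)⁻¹), norm_inv, norm_t]
      _ ≤ 1 := mul_inv_le_one
  · rw [← norm_toLp_fiberNorm r f x]
    exact norm_toLp_le_norm_toLp r fun k => (norm_t k).le.trans (le_abs_self _)

end LpNorm

section FiberMatrix

variable {ι κ μ R : Type*} [Fintype κ] [DecidableEq κ]

/-- The matrix supported on the graph of `f : ι → κ`, with entry `a i` at `(i, f i)`. -/
def fiberMatrix [Zero R] (f : ι → κ) (a : ι → R) : Matrix ι κ R :=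
  of fun i k => if f i = k then a i else 0

theorem fiberMatrix_mulVec [NonUnitalNonAssocSemiring R] (f : ι → κ) (a : ι → R) (w : κ → R) :
    fiberMatrix f a *ᵥ w = fun i => a i * w (f i) := by
  ext i
  simp [fiberMatrix, mulVec, dotProduct]

theorem submatrix_hadamard_mulVec [Fintype ι] [CommSemiring R] (M : Matrix μ κ R) (S : Matrix μ ι R)
    (f : ι → κ) (a : ι → R) (t : κ → R) :
    (M.submatrix id f ⊙ S) *ᵥ (fun i => a i * t (f i)) = (M ⊙ (S * fiberMatrix f a)) *ᵥ t := by
  ext j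
  simp only [mulVec, dotProduct, hadamard_apply, submatrix_apply, id, mul_apply, fiberMatrix,
    of_apply, Finset.mul_sum, Finset.sum_mul]
  rw [Finset.sum_comm]
  simp [mul_assoc]

end FiberMatrix

section ExtendRows

variable {ι κ μ R : Type*} [NonUnitalNonAssocSemiring R] {g : ι → μ}

/-- The matrix whose row `g i` is the row `i` of `A`, for `g` injective, and whose rows outside the
range of `g` vanish. -/
noncomputable def extendRows (g : ι → μ) (A : Matrix ι κ R) : Matrix μ κ R :=
  of fun j k => Function.extend g (fun i => A i k) 0 j

theorem extendRows_mulVec [Fintype κ] (hg : g.Injective) (A : Matrix ι κ R) (x : κ → R) :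
    extendRows g A *ᵥ x = Function.extend g (A *ᵥ x) 0 := by
  ext j
  by_cases hj : ∃ i, g i = j
  · obtain ⟨i, rfl⟩ := hj
    simp only [extendRows, mulVec, dotProduct, of_apply, hg.extend_apply]
  · simp [extendRows, mulVec, dotProduct, Function.extend_apply' _ _ _ hj]

theorem hadamard_extendRows (hg : g.Injective) (M : Matrix μ κ R) (S : Matrix ι κ R) :
    M ⊙ extendRows g S = extendRows g (M.submatrix g id ⊙ S) := by
  ext j k
  by_cases hj : ∃ i, g i = j
  · obtain ⟨i, rfl⟩ := hj
    simp only [extendRows, hadamard_apply, of_apply, hg.extend_apply, submatrix_apply, id]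
  · simp [extendRows, Function.extend_apply' _ _ _ hj]

end ExtendRows

section LpOpNorm

variable {𝕜 ι κ μ : Type*} [NontriviallyNormedField 𝕜] [CompleteSpace 𝕜] [Fintype ι] [Fintype κ]
  [Fintype μ] [DecidableEq κ] (p q r : ℝ≥0∞) [Fact (1 ≤ p)] [Fact (1 ≤ q)]
  [Fact (1 ≤ r)]

/-- The norm of a rectangular matrix as an operator from `ℓ^p` to `ℓ^q`. -/
noncomputable def lpOpNorm (A : Matrix ι κ 𝕜) : ℝ :=
  ‖(A.toLpLin p q).toContinuousLinearMap‖

theorem lpOpNorm_nonneg (A : Matrix ι κ 𝕜) : 0 ≤ lpOpNorm p q A := norm_nonneg _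

theorem norm_toLp_mulVec_le (A : Matrix ι κ 𝕜) (x : κ → 𝕜) :
    ‖toLp q (A *ᵥ x)‖ ≤ lpOpNorm p q A * ‖toLp p x‖ :=
  (A.toLpLin p q).toContinuousLinearMap.le_opNorm (toLp p x)

variable {p q} in
theorem lpOpNorm_le_of_forall {A : Matrix ι κ 𝕜} {K : ℝ} (hK : 0 ≤ K)
    (h : ∀ x, ‖toLp q (A *ᵥ x)‖ ≤ K * ‖toLp p x‖) : lpOpNorm p q A ≤ K :=
  ContinuousLinearMap.opNorm_le_bound _ hK fun x => h (ofLp x)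

theorem lpOpNorm_mul_le [DecidableEq ι] (A : Matrix μ ι 𝕜) (B : Matrix ι κ 𝕜) :
    lpOpNorm p r (A * B) ≤ lpOpNorm q r A * lpOpNorm p q B := by
  rw [lpOpNorm, toLpLin_mul p q r]
  exact ContinuousLinearMap.opNorm_comp_le (A.toLpLin q r).toContinuousLinearMap
    (B.toLpLin p q).toContinuousLinearMap

variable {p} in
theorem lpOpNorm_fiberMatrix_le_one {f : ι → κ} {a : ι → 𝕜} (ha : ∀ k, fiberNorm p f a k ≤ 1) :
    lpOpNorm p p (fiberMatrix f a) ≤ 1 := by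
  refine lpOpNorm_le_of_forall zero_le_one fun w => ?_
  rw [one_mul, fiberMatrix_mulVec, ← norm_toLp_fiberNorm p f]
  refine norm_toLp_le_norm_toLp p fun k => ?_
  rw [Real.norm_of_nonneg (fiberNorm_nonneg _ _ _ _), fiberNorm_mul_comp]
  exact mul_le_of_le_one_left (norm_nonneg _) (ha k)

theorem lpOpNorm_extendRows {g : ι → μ} (hg : g.Injective) (A : Matrix ι κ 𝕜) :
    lpOpNorm p q (extendRows g A) = lpOpNorm p q A := by
  refine ContinuousLinearMap.opNorm_ext _ _ fun x => ?_
  calc ‖toLp q (extendRows g A *ᵥ ofLp x)‖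
      = ‖toLp q (Function.extend g (A *ᵥ ofLp x) 0)‖ := by rw [extendRows_mulVec hg]
    _ = ‖toLp q (A *ᵥ ofLp x)‖ := norm_toLp_extend_zero q hg _

end LpOpNorm

section SchurBound

/-- The leading `n × n` section of an infinite matrix. -/
def leadingSection {R : Type*} (M : Matrix ℕ ℕ R) (n : ℕ) : Matrix (Fin n) (Fin n) R :=
  M.submatrix Fin.val Fin.val

variable {𝕜 ι κ μ ν : Type*} [RCLike 𝕜] [Fintype ι] [Fintype κ] [Fintype μ] [Fintype ν]
  [DecidableEq ι] [DecidableEq κ] {p q r s : ℝ≥0∞} [Fact (1 ≤ p)] [Fact (1 ≤ q)] [Fact (1 ≤ r)]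
  [Fact (1 ≤ s)] {C : ℝ}

variable (p q r s) in
/-- Schur multiplication by `M` has norm at most `C` from `L(ℓ^p, ℓ^q)` to `L(ℓ^r, ℓ^s)`. -/
def SchurBound (M : Matrix μ κ 𝕜) (C : ℝ) : Prop :=
  ∀ S : Matrix μ κ 𝕜, lpOpNorm r s (M ⊙ S) ≤ C * lpOpNorm p q S

theorem SchurBound.submatrix_columns {M : Matrix μ κ 𝕜} (h : SchurBound p q r s M C)
    (hrp : r ≤ p) (hC : 0 ≤ C) (f : ι → κ) : SchurBound p q r s (M.submatrix id f) C := by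
  intro S
  refine lpOpNorm_le_of_forall (mul_nonneg hC (lpOpNorm_nonneg p q S)) fun x => ?_
  obtain ⟨a, t, rfl, ha, ht⟩ := exists_fiberwise_factorization hrp f x
  set T := S * fiberMatrix f a
  have hT : lpOpNorm p q T ≤ lpOpNorm p q S :=
    (lpOpNorm_mul_le p p q S _).trans
      (mul_le_of_le_one_right (lpOpNorm_nonneg p q S) (lpOpNorm_fiberMatrix_le_one ha))
  have hS := lpOpNorm_nonneg p q S
  rw [submatrix_hadamard_mulVec]
  calc ‖toLp s ((M ⊙ T) *ᵥ t)‖ ≤ lpOpNorm r s (M ⊙ T) * ‖toLp r t‖ := norm_toLp_mulVec_le r s _ t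
    _ ≤ C * lpOpNorm p q T * ‖toLp r t‖ := by gcongr; exact h T
    _ ≤ C * lpOpNorm p q S * ‖toLp r fun i => a i * t (f i)‖ := by gcongr

theorem SchurBound.submatrix_rows {M : Matrix μ κ 𝕜} (h : SchurBound p q r s M C) {g : ν → μ}
    (hg : g.Injective) : SchurBound p q r s (M.submatrix g id) C := fun S =>
  calc lpOpNorm r s (M.submatrix g id ⊙ S) = lpOpNorm r s (M ⊙ extendRows g S) := by
        rw [hadamard_extendRows hg, lpOpNorm_extendRows r s hg]
    _ ≤ C * lpOpNorm p q (extendRows g S) := h _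
    _ = C * lpOpNorm p q S := by rw [lpOpNorm_extendRows p q hg]

theorem SchurBound.submatrix_of_leadingSection {M : Matrix ℕ ℕ 𝕜}
    (h : ∀ n, SchurBound p q r s (leadingSection M n) C) (hrp : r ≤ p) (hC : 0 ≤ C)
    {g : ν → ℕ} (hg : g.Injective) (f : ι → ℕ) :
    SchurBound p q r s (M.submatrix g f) C := by
  obtain ⟨a, ha⟩ := (Set.finite_range g).bddAbove
  obtain ⟨b, hb⟩ := (Set.finite_range f).bddAbove
  have g_lt (j : ν) : g j < max a b + 1 :=
    Nat.lt_succ_of_le (le_max_of_le_left (ha (Set.mem_range_self j)))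
  have f_lt (k : ι) : f k < max a b + 1 :=
    Nat.lt_succ_of_le (le_max_of_le_right (hb (Set.mem_range_self k)))
  let g' (j : ν) : Fin (max a b + 1) := ⟨g j, g_lt j⟩
  have hg' : g'.Injective := fun _ _ hij => hg (congrArg Fin.val hij)
  exact ((h _).submatrix_rows hg').submatrix_columns hrp hC fun k => ⟨f k, f_lt k⟩

theorem stmt_15_general (hrp : r ≤ p) (M : Matrix ℕ ℕ 𝕜) {f : ℕ → ℕ} (hf : f.Surjective)
    (hC : 0 ≤ C) :
    (∀ n, SchurBound p q r s (leadingSection M n) C) ↔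
      ∀ n, SchurBound p q r s (leadingSection (M.submatrix id f) n) C := by
  refine ⟨fun h n => .submatrix_of_leadingSection h hrp hC Fin.val_injective (f ∘ Fin.val),
    fun h n => ?_⟩
  have hn := SchurBound.submatrix_of_leadingSection h hrp hC (g := (Fin.val : Fin n → ℕ))
    Fin.val_injective (Function.surjInv hf ∘ (Fin.val : Fin n → ℕ))
  have hfs : f ∘ Function.surjInv hf = id := funext (Function.surjInv_eq hf)
  rwa [submatrix_submatrix, Function.id_comp, ← Function.comp_assoc, hfs] at hn

end SchurBound

/-- Let `p, q, r, s ∈ [1,∞]` with `r ≤ p`, and let `M` be a matrix such that Schur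
multiplication by `M` is bounded from `L(ℓ_p,ℓ_q)` to `L(ℓ_r,ℓ_s)` (expressed via finite
sections).  Then Schur multiplication by `M̃`, obtained by repeating the first column of
`M`, is bounded with the same norm: a constant `C ≥ 0` bounds the one if and only if it
bounds the other. -/
theorem stmt_15 (p q r s : ℝ≥0∞) [Fact (1 ≤ p)] [Fact (1 ≤ q)] [Fact (1 ≤ r)]
    [Fact (1 ≤ s)] (hrp : r ≤ p) (M : ℕ → ℕ → ℂ) (C : ℝ) (hC : 0 ≤ C) :
    (∀ (n : ℕ) (S : Matrix (Fin n) (Fin n) ℂ),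
      lpqOpNorm r s (Matrix.of fun j k : Fin n => M (j : ℕ) (k : ℕ) * S j k) ≤
        C * lpqOpNorm p q S) ↔
    (∀ (n : ℕ) (S : Matrix (Fin n) (Fin n) ℂ),
      lpqOpNorm r s (Matrix.of fun j k : Fin n => colRepeat M (j : ℕ) (k : ℕ) * S j k) ≤
        C * lpqOpNorm p q S) :=
  stmt_15_general (q := q) (s := s) hrp (of M) (f := (· - 1)) (fun k => ⟨k + 1, rfl⟩) hC
end

section
/- For 1 ≠ p ≥ q ≠ ∞ there exists a constant C > 0 such that for all n ∈ ℕ, the triangular truncation operator T_{Δ,n} on L(ℓ_p, ℓ_q), sending S to the matrix with entries s_{kj} for k ≤ j ≤ n and 0 otherwise, satisfies ‖T_{Δ,n}‖_{L(L(ℓ_p,ℓ_q))} ≥ C ln n. -/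
open scoped ENNReal

/-!
The truncated Hilbert matrix `1 / (j - k)` carries harmonic sums in its rows, so against the
all-ones vector it is larger by a factor `log n` than the Hilbert matrix itself, provided the latter
is bounded on some `ℓ_r` with `q ≤ r ≤ p` and `1 < r < ∞`; passing from `ℓ_p` to `ℓ_r` and from
`ℓ_r` to `ℓ_q` in dimension `n` costs the same power of `n` on both sides. Boundedness is Cotlar's
argument: up to terms with the kernel `1 / (j - k) ^ 2`, to which Schur's test applies, the product
`H u * H v` equals `H (u * H v + v * H u)`. Taking for `u` an eigenvector of `H` and for `v` its
conjugate gives the case `r = 2`; taking `u = v` passes from `r` to `2 * r`; duality and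
Riesz–Thorin interpolation reach every `1 < r < ∞`.
-/

namespace TriangularTruncation

open Finset Matrix MeasureTheory WithLp

section PiLpNorm

variable {ι E F 𝕜 : Type*} [Fintype ι] [NormedAddCommGroup E] [NormedAddCommGroup F] [RCLike 𝕜]
  {p q r : ℝ≥0∞}

lemma norm_toLp_nonneg (p : ℝ≥0∞) (v : ι → E) : 0 ≤ ‖toLp p v‖ := by
  rcases p.trichotomy with rfl | rfl | hp
  · rw [PiLp.norm_eq_card]; positivity
  · exact Real.iSup_nonneg fun _ => norm_nonneg _
  · rw [PiLp.norm_eq_sum hp]; positivity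

lemma eLpNorm_count_eq_ofReal_norm_toLp [MeasurableSpace ι] [MeasurableSingletonClass ι]
    (hp : p ≠ 0) (v : ι → E) : eLpNorm v p Measure.count = ENNReal.ofReal ‖toLp p v‖ := by
  rcases eq_or_ne p ∞ with rfl | hp_top
  · rw [eLpNorm_exponent_top, eLpNormEssSup_count, ofReal_norm, ← edist_zero_right,
      PiLp.edist_eq_iSup]
    simp
  · have hp₀ := ENNReal.toReal_pos hp hp_top
    rw [eLpNorm_eq_lintegral_rpow_enorm_toReal hp hp_top, lintegral_count, tsum_fintype,
      PiLp.norm_eq_sum hp₀, ← ENNReal.ofReal_rpow_of_nonneg (by positivity) (by positivity),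
      ENNReal.ofReal_sum_of_nonneg fun _ _ => by positivity]
    simp_rw [← ENNReal.ofReal_rpow_of_nonneg (norm_nonneg _) hp₀.le, ofReal_norm]

lemma norm_toLp_le_card_rpow_mul_norm_toLp (hp : p ≠ 0) (hpq : p ≤ q) (v : ι → E) :
    ‖toLp p v‖ ≤ (Fintype.card ι : ℝ) ^ (p.toReal⁻¹ - q.toReal⁻¹) * ‖toLp q v‖ := by
  let _ : MeasurableSpace ι := ⊤
  have hq : q ≠ 0 := (hp.bot_lt.trans_le hpq).ne'
  have hexp : 0 ≤ p.toReal⁻¹ - q.toReal⁻¹ := by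
    rw [← ENNReal.toReal_inv, ← ENNReal.toReal_inv, sub_nonneg]
    exact ENNReal.toReal_mono (ENNReal.inv_ne_top.2 hp) (ENNReal.inv_le_inv.2 hpq)
  have h := eLpNorm_le_eLpNorm_mul_rpow_measure_univ (μ := Measure.count) hpq
    (AEStronglyMeasurable.of_discrete (f := v))
  rwa [eLpNorm_count_eq_ofReal_norm_toLp hp, eLpNorm_count_eq_ofReal_norm_toLp hq,
    Measure.count_univ, ENat.card_eq_coe_fintype_card, ENat.toENNReal_coe, one_div, one_div,
    ← ENNReal.ofReal_natCast, ENNReal.ofReal_rpow_of_nonneg (by positivity) hexp, mul_comm,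
    ← ENNReal.ofReal_mul (by positivity), ENNReal.ofReal_le_ofReal_iff
      (mul_nonneg (by positivity) (norm_toLp_nonneg q v))] at h

lemma norm_toLp_mul_le [ENNReal.HolderTriple p q r] (hr : r ≠ 0) (u v : ι → 𝕜) :
    ‖toLp r (u * v)‖ ≤ ‖toLp p u‖ * ‖toLp q v‖ := by
  let _ : MeasurableSpace ι := ⊤
  have hp : p ≠ 0 := (hr.bot_lt.trans_le (ENNReal.HolderTriple.le p q r)).ne'
  have hq : q ≠ 0 := (hr.bot_lt.trans_le (ENNReal.HolderTriple.le q p r)).ne'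
  have h := eLpNorm_smul_le_mul_eLpNorm (μ := Measure.count) (p := p) (q := q) (r := r)
    (AEStronglyMeasurable.of_discrete (f := v)) (AEStronglyMeasurable.of_discrete (f := u))
  rwa [eLpNorm_count_eq_ofReal_norm_toLp hp, eLpNorm_count_eq_ofReal_norm_toLp hq,
    eLpNorm_count_eq_ofReal_norm_toLp hr, smul_eq_mul,
    ← ENNReal.ofReal_mul (norm_toLp_nonneg p u), ENNReal.ofReal_le_ofReal_iff
      (mul_nonneg (norm_toLp_nonneg p u) (norm_toLp_nonneg q v))] at h

lemma norm_toLp_rpow_toReal (hp : 0 < p.toReal) (v : ι → E) :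
    ‖toLp p v‖ ^ p.toReal = ∑ i, ‖v i‖ ^ p.toReal := by
  rw [PiLp.norm_eq_sum hp, ← Real.rpow_mul (by positivity), one_div_mul_cancel hp.ne',
    Real.rpow_one]

lemma norm_toLp_one (v : ι → E) : ‖toLp 1 v‖ = ∑ i, ‖v i‖ := by
  rw [PiLp.norm_eq_sum (by simp)]
  simp

lemma norm_dotProduct_le [ENNReal.HolderConjugate p q] (u v : ι → 𝕜) :
    ‖u ⬝ᵥ v‖ ≤ ‖toLp p u‖ * ‖toLp q v‖ := calc
  ‖u ⬝ᵥ v‖ ≤ ∑ i, ‖(u * v) i‖ := norm_sum_le univ fun i => u i * v i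
  _ = ‖toLp 1 (u * v)‖ := (norm_toLp_one _).symm
  _ ≤ ‖toLp p u‖ * ‖toLp q v‖ := norm_toLp_mul_le one_ne_zero u v

lemma norm_toLp_eq_rpow_of_norm_eq_rpow {t : ℝ} (hp : 0 < p.toReal) (ht : 0 < t)
    (hr : r.toReal = t * p.toReal) {u : ι → E} {v : ι → F} (huv : ∀ i, ‖u i‖ = ‖v i‖ ^ t) :
    ‖toLp p u‖ = ‖toLp r v‖ ^ t := by
  rw [PiLp.norm_eq_sum hp, PiLp.norm_eq_sum (hr ▸ mul_pos ht hp), ← Real.rpow_mul (by positivity)]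
  congr 1
  · simp [huv, hr, Real.rpow_mul]
  · rw [hr]; field_simp

lemma norm_toLp_sq (hp : 0 < p.toReal) (v : ι → 𝕜) : ‖toLp p (v ^ 2)‖ = ‖toLp (2 * p) v‖ ^ 2 := by
  simpa using norm_toLp_eq_rpow_of_norm_eq_rpow (t := 2) hp two_pos (ENNReal.toReal_mul ..)
    (u := v ^ 2) (v := v) (by simp)

lemma exists_norm_eq_rpow_and_mul_eq (c : 𝕜) {t : ℝ} (ht : 0 < t) :
    ∃ b : 𝕜, ‖b‖ = ‖c‖ ^ t ∧ b * c = ((‖c‖ ^ (t + 1) : ℝ) : 𝕜) := by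
  rcases eq_or_ne c 0 with rfl | hc
  · exact ⟨0, by simp [ht.ne'], by simp [(add_pos ht one_pos).ne']⟩
  have hc' := norm_pos_iff.2 hc
  refine ⟨starRingEnd 𝕜 c * ((‖c‖ ^ (t - 1) : ℝ) : 𝕜), ?_, ?_⟩
  · rw [norm_mul, RCLike.norm_conj, RCLike.norm_ofReal, abs_of_nonneg (by positivity),
      Real.rpow_sub_one hc'.ne', mul_div_cancel₀ _ hc'.ne']
  · rw [mul_right_comm, RCLike.conj_mul, Real.rpow_sub_one hc'.ne', Real.rpow_add_one hc'.ne']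
    norm_cast
    field_simp

lemma norm_toLp_le_of_forall_norm_dotProduct_le [ENNReal.HolderConjugate p q] (hp : p ≠ ∞)
    (hq : q ≠ ∞) {w : ι → 𝕜} {M : ℝ} (hM : 0 ≤ M)
    (h : ∀ g : ι → 𝕜, ‖g ⬝ᵥ w‖ ≤ M * ‖toLp q g‖) : ‖toLp p w‖ ≤ M := by
  have hpq := ENNReal.HolderConjugate.toReal_of_ne_top hp hq
  choose g norm_g g_mul using fun i => exists_norm_eq_rpow_and_mul_eq (w i) hpq.sub_one_pos
  rcases (norm_toLp_nonneg p w).eq_or_lt with hw | hw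
  · rwa [← hw]
  have norm_pow : ‖toLp p w‖ ^ p.toReal = ‖g ⬝ᵥ w‖ := by
    rw [norm_toLp_rpow_toReal hpq.pos, dotProduct, sum_congr rfl fun i _ => g_mul i, sub_add_cancel,
      ← RCLike.ofReal_sum, RCLike.norm_ofReal, abs_of_nonneg (by positivity)]
  have norm_toLp_g : ‖toLp q g‖ = ‖toLp p w‖ ^ (p.toReal - 1) :=
    norm_toLp_eq_rpow_of_norm_eq_rpow hpq.symm.pos hpq.sub_one_pos hpq.sub_one_mul_conj.symm norm_g
  refine le_of_mul_le_mul_right ?_ (Real.rpow_pos_of_pos hw (p.toReal - 1))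
  calc ‖toLp p w‖ * ‖toLp p w‖ ^ (p.toReal - 1) = ‖toLp p w‖ ^ p.toReal := by
        rw [Real.rpow_sub_one hw.ne', mul_div_cancel₀ _ hw.ne']
    _ ≤ M * ‖toLp p w‖ ^ (p.toReal - 1) := norm_pow ▸ norm_toLp_g ▸ h g

end PiLpNorm

section LpqBoundedBy

variable {ι κ 𝕜 : Type*} [Fintype ι] {p q p' q' : ℝ≥0∞}

/-- The matrix `A`, as an operator from `ℓ_p` to `ℓ_q`, has norm at most `M`. The exponents are
not required to be at least `1`. -/
def LpqBoundedBy [Fintype κ] [NormedField 𝕜] (p q : ℝ≥0∞) (A : Matrix κ ι 𝕜) (M : ℝ) : Prop :=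
  ∀ v : ι → 𝕜, ‖toLp q (A *ᵥ v)‖ ≤ M * ‖toLp p v‖

lemma LpqBoundedBy.mono_exponent [Fintype κ] [NormedField 𝕜] {r s : ℝ≥0∞}
    {A : Matrix κ ι 𝕜} {N : ℝ} (hA : LpqBoundedBy r s A N) (hN : 0 ≤ N) (hr : r ≠ 0)
    (hrp : r ≤ p) (hq : q ≠ 0) (hqs : q ≤ s) :
    LpqBoundedBy p q A ((Fintype.card κ : ℝ) ^ (q.toReal⁻¹ - s.toReal⁻¹)
      * (N * (Fintype.card ι : ℝ) ^ (r.toReal⁻¹ - p.toReal⁻¹))) := by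
  intro v
  refine (norm_toLp_le_card_rpow_mul_norm_toLp hq hqs _).trans ?_
  rw [mul_assoc, mul_assoc]
  gcongr
  refine (hA v).trans ?_
  gcongr
  exact norm_toLp_le_card_rpow_mul_norm_toLp hr hrp v

lemma ne_top_of_one_lt_toReal (hp : 1 < p.toReal) : p ≠ ∞ :=
  (ENNReal.toReal_pos_iff.1 (one_pos.trans hp)).2.ne

lemma exists_holderConjugate (hp : 1 < p.toReal) :
    ∃ q : ℝ≥0∞, ENNReal.HolderConjugate q p ∧ 1 < q.toReal ∧ q.toReal⁻¹ = 1 - p.toReal⁻¹ := by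
  have conj := Real.HolderConjugate.conjExponent hp
  have hp_top := ne_top_of_one_lt_toReal hp
  refine ⟨ENNReal.ofReal p.toReal.conjExponent, ?_, ?_, ?_⟩
  · simpa [hp_top] using conj.symm.ennrealOfReal
  all_goals rw [ENNReal.toReal_ofReal conj.symm.nonneg]
  · exact conj.symm.lt
  · exact eq_sub_of_add_eq' conj.inv_add_inv_eq_one

lemma LpqBoundedBy.norm_dotProduct_mulVec_le [Fintype κ] [RCLike 𝕜] {A : Matrix κ ι 𝕜} {M : ℝ}
    (hA : LpqBoundedBy p q A M) (q' : ℝ≥0∞) [ENNReal.HolderConjugate q' q] (g : κ → 𝕜)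
    (v : ι → 𝕜) : ‖g ⬝ᵥ A *ᵥ v‖ ≤ M * (‖toLp q' g‖ * ‖toLp p v‖) := calc
  _ ≤ ‖toLp q' g‖ * ‖toLp q (A *ᵥ v)‖ := norm_dotProduct_le g _
  _ ≤ ‖toLp q' g‖ * (M * ‖toLp p v‖) := mul_le_mul_of_nonneg_left (hA v) (norm_toLp_nonneg q' g)
  _ = _ := by ring

lemma LpqBoundedBy.transpose [Fintype κ] [RCLike 𝕜] {A : Matrix κ ι 𝕜} {M : ℝ}
    (hA : LpqBoundedBy p q A M) (hM : 0 ≤ M) [ENNReal.HolderConjugate p p']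
    [ENNReal.HolderConjugate q q'] (hp : p ≠ ∞) (hp' : p' ≠ ∞) : LpqBoundedBy q' p' Aᵀ M := by
  intro v
  have : ENNReal.HolderConjugate q' q := .symm
  refine norm_toLp_le_of_forall_norm_dotProduct_le (q := p) hp' hp
    (mul_nonneg hM (norm_toLp_nonneg q' v)) fun g => ?_
  rw [mulVec_transpose, dotProduct_comm, ← dotProduct_mulVec, mul_assoc]
  exact hA.norm_dotProduct_mulVec_le q' v g

lemma sum_norm_mulVec_rpow_le [NormedField 𝕜] {A : Matrix κ ι 𝕜} {M : ℝ} (t : ℝ) (ht : 1 ≤ t)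
    (row : ∀ i, ∑ j, ‖A i j‖ ≤ M) (v : ι → 𝕜) (i : κ) :
    ‖(A *ᵥ v) i‖ ^ t ≤ M ^ (t - 1) * ∑ j, ‖A i j‖ * ‖v j‖ ^ t := by
  have ht₀ : 0 < t := one_pos.trans_le ht
  calc ‖(A *ᵥ v) i‖ ^ t ≤ (∑ j, ‖A i j‖ * ‖v j‖) ^ t := by
        gcongr
        exact norm_sum_le_of_le _ fun j _ => norm_mul_le _ _
    _ ≤ ((∑ j, ‖A i j‖) ^ (1 - t⁻¹) * (∑ j, ‖A i j‖ * ‖v j‖ ^ t) ^ t⁻¹) ^ t := by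
        gcongr
        exact Real.inner_le_weight_mul_Lp_of_nonneg univ ht _ _ (fun _ => norm_nonneg _)
          fun _ => norm_nonneg _
    _ = (∑ j, ‖A i j‖) ^ (t - 1) * ∑ j, ‖A i j‖ * ‖v j‖ ^ t := by
        rw [Real.mul_rpow (by positivity) (by positivity), ← Real.rpow_mul (by positivity),
          ← Real.rpow_mul (by positivity), inv_mul_cancel₀ ht₀.ne', Real.rpow_one, sub_mul,
          inv_mul_cancel₀ ht₀.ne', one_mul]
    _ ≤ M ^ (t - 1) * ∑ j, ‖A i j‖ * ‖v j‖ ^ t := by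
        gcongr
        exact row i

/-- Schur's test. -/
lemma lpqBoundedBy_of_row_sum_le_of_col_sum_le [Fintype κ] [NormedField 𝕜] {A : Matrix κ ι 𝕜}
    {M : ℝ} (hp : 1 ≤ p.toReal) (hM : 0 ≤ M) (row : ∀ i, ∑ j, ‖A i j‖ ≤ M)
    (col : ∀ j, ∑ i, ‖A i j‖ ≤ M) : LpqBoundedBy p p A M := by
  intro v
  have hp₀ : 0 < p.toReal := one_pos.trans_le hp
  have norm_v := norm_toLp_nonneg p v
  rw [← Real.rpow_le_rpow_iff (norm_toLp_nonneg p _) (by positivity) hp₀,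
    Real.mul_rpow hM norm_v, norm_toLp_rpow_toReal hp₀, norm_toLp_rpow_toReal hp₀]
  calc ∑ i, ‖(A *ᵥ v) i‖ ^ p.toReal
      ≤ ∑ i, M ^ (p.toReal - 1) * ∑ j, ‖A i j‖ * ‖v j‖ ^ p.toReal :=
        sum_le_sum fun i _ => sum_norm_mulVec_rpow_le _ hp row v i
    _ = M ^ (p.toReal - 1) * ∑ j, (∑ i, ‖A i j‖) * ‖v j‖ ^ p.toReal := by
        rw [← mul_sum, sum_comm]; simp only [sum_mul]
    _ ≤ M ^ (p.toReal - 1) * ∑ j, M * ‖v j‖ ^ p.toReal := by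
        gcongr with j; exact col j
    _ = M ^ p.toReal * ∑ j, ‖v j‖ ^ p.toReal := by
        rw [← mul_sum, ← mul_assoc, ← Real.rpow_add_one' hM (by simpa using hp₀.ne'),
          sub_add_cancel]

lemma lpqBoundedBy_two_of_abs_eigenvalues_le [DecidableEq ι] [RCLike 𝕜] {A : Matrix ι ι 𝕜} {M : ℝ}
    (hA : A.IsHermitian) (hM : 0 ≤ M) (h : ∀ i, |hA.eigenvalues i| ≤ M) :
    LpqBoundedBy 2 2 A M := by
  intro v
  have coordinate (i : ι) : ‖inner 𝕜 (hA.eigenvectorBasis i) (toLp 2 (A *ᵥ v))‖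
      ≤ M * ‖inner 𝕜 (hA.eigenvectorBasis i) (toLp 2 v)‖ := by
    have symm : inner 𝕜 (toEuclideanLin A (hA.eigenvectorBasis i)) (toLp 2 v)
        = inner 𝕜 (hA.eigenvectorBasis i) (toLp 2 (A *ᵥ v)) :=
      isSymmetric_toEuclideanLin_iff.2 hA _ _
    have eigen : toEuclideanLin A (hA.eigenvectorBasis i)
        = (hA.eigenvalues i : 𝕜) • hA.eigenvectorBasis i := by
      rw [toLpLin_apply, hA.mulVec_eigenvectorBasis, RCLike.real_smul_eq_coe_smul (K := 𝕜)]
      rfl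
    rw [← symm, eigen, inner_smul_left, norm_mul, RCLike.norm_conj, RCLike.norm_ofReal]
    exact mul_le_mul_of_nonneg_right (h i) (norm_nonneg _)
  refine le_of_sq_le_sq ?_ (by positivity)
  rw [mul_pow, ← hA.eigenvectorBasis.sum_sq_norm_inner_right,
    ← hA.eigenvectorBasis.sum_sq_norm_inner_right (toLp 2 v), mul_sum]
  refine sum_le_sum fun i _ => ?_
  rw [← mul_pow]
  exact pow_le_pow_left₀ (norm_nonneg _) (coordinate i) 2

end LpqBoundedBy

section DifferenceKernel

variable {ι 𝕜 : Type*}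

/-- The Cauchy-type matrix `1 / (x i - x j)` of a family of scalars; its diagonal vanishes because
`0⁻¹ = 0`. For `x = 0, 1, …, n - 1` it is the discrete Hilbert transform. -/
def differenceKernel [Field 𝕜] (x : ι → 𝕜) : Matrix ι ι 𝕜 :=
  of fun i j => (x i - x j)⁻¹

lemma differenceKernel_transpose [Field 𝕜] (x : ι → 𝕜) :
    (differenceKernel x)ᵀ = -differenceKernel x := by
  ext i j
  simp only [differenceKernel, transpose_apply, of_apply, Matrix.neg_apply, ← inv_neg, neg_sub]

lemma differenceKernel_mul_differenceKernel [Field 𝕜] [DecidableEq ι] {x : ι → 𝕜}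
    (hx : x.Injective) (i j k : ι) :
    differenceKernel x i j * differenceKernel x i k =
      differenceKernel x i j * differenceKernel x j k
        + differenceKernel x i k * differenceKernel x k j
        + (if j = k then differenceKernel x i j ^ 2 else 0)
        + (if i = j then differenceKernel x i k ^ 2 else 0)
        + (if i = k then differenceKernel x i j ^ 2 else 0) := by
  have sub_ne {a b : ι} (h : a ≠ b) : x a - x b ≠ 0 := sub_ne_zero.2 (hx.ne h)
  have kernel_symm : (x k - x j)⁻¹ = -(x j - x k)⁻¹ := by rw [← inv_neg, neg_sub]
  simp only [differenceKernel, of_apply]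
  rcases eq_or_ne j k with rfl | hjk
  · rcases eq_or_ne i j with rfl | hij
    · simp
    · simp [hij, sq]
  rcases eq_or_ne i j with rfl | hij
  · simp [hjk, kernel_symm, sq]
  rcases eq_or_ne i k with rfl | hik
  · simp [hjk, hij, kernel_symm, sq]
  have := sub_ne hij
  have := sub_ne hik
  have := sub_ne hjk
  simp only [hij, hik, hjk, if_false, kernel_symm]
  field_simp
  ring

/-- Cotlar's identity. -/
lemma differenceKernel_mulVec_mul_differenceKernel_mulVec [Fintype ι] [Field 𝕜] {x : ι → 𝕜}
    (hx : x.Injective) (u v : ι → 𝕜) :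
    differenceKernel x *ᵥ u * differenceKernel x *ᵥ v =
      differenceKernel x *ᵥ (u * differenceKernel x *ᵥ v + v * differenceKernel x *ᵥ u)
        + (differenceKernel x ⊙ differenceKernel x) *ᵥ (u * v)
        + u * (differenceKernel x ⊙ differenceKernel x) *ᵥ v
        + v * (differenceKernel x ⊙ differenceKernel x) *ᵥ u := by
  classical
  have kernel := differenceKernel_mul_differenceKernel hx
  generalize differenceKernel x = C at kernel ⊢
  ext i
  have expand : (C *ᵥ u) i * (C *ᵥ v) i = ∑ j, ∑ k, u j * v k * (C i j * C i k) := by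
    simp only [mulVec, dotProduct, sum_mul_sum]
    exact sum_congr rfl fun j _ => sum_congr rfl fun k _ => by ring
  have iterate (u v : ι → 𝕜) :
      (C *ᵥ (u * C *ᵥ v)) i = ∑ j, ∑ k, u j * v k * (C i j * C j k) := by
    simp only [mulVec, dotProduct, Pi.mul_apply, mul_sum]
    exact sum_congr rfl fun j _ => sum_congr rfl fun k _ => by ring
  have iterate_swap :
      (C *ᵥ (v * C *ᵥ u)) i = ∑ j, ∑ k, u j * v k * (C i k * C k j) := by
    rw [iterate, sum_comm]
    exact sum_congr rfl fun j _ => sum_congr rfl fun k _ => by ring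
  rw [mulVec_add]
  simp only [Pi.add_apply, Pi.mul_apply]
  rw [expand, iterate, iterate_swap]
  simp only [kernel, mul_add, sum_add_distrib, mul_ite,
    mul_zero, sum_ite_eq, mem_univ, if_true, sum_ite_irrel, sum_const_zero]
  simp only [mulVec, dotProduct, hadamard_apply, mul_sum, Pi.mul_apply]
  simp only [sq, mul_comm, mul_left_comm]

lemma holderTriple_two_mul (p : ℝ≥0∞) : ENNReal.HolderTriple (2 * p) (2 * p) p where
  inv_add_inv_eq_inv := by
    rw [ENNReal.mul_inv (.inl two_ne_zero) (.inl ENNReal.ofNat_ne_top), ← two_mul, ← mul_assoc,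
      ENNReal.mul_inv_cancel two_ne_zero ENNReal.ofNat_ne_top, one_mul]

lemma norm_differenceKernel_mulVec_mul_le [Fintype ι] [RCLike 𝕜] {x : ι → 𝕜}
    (hx : x.Injective) {p : ℝ≥0∞} [Fact (1 ≤ p)] (hp : p ≠ ∞) {κ : ℝ} (hκ : 0 ≤ κ)
    (row : ∀ i, ∑ j, ‖differenceKernel x i j‖ ^ 2 ≤ κ) (u v : ι → 𝕜) :
    ‖toLp p (differenceKernel x *ᵥ u * differenceKernel x *ᵥ v)‖ ≤
      ‖toLp p (differenceKernel x *ᵥ (u * differenceKernel x *ᵥ v + v * differenceKernel x *ᵥ u))‖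
        + 3 * κ * (‖toLp (2 * p) u‖ * ‖toLp (2 * p) v‖) := by
  have kernel_symm i j : ‖differenceKernel x i j‖ = ‖differenceKernel x j i‖ := by
    simp only [differenceKernel, of_apply, norm_inv, norm_sub_rev]
  have cotlar := differenceKernel_mulVec_mul_differenceKernel_mulVec hx u v
  generalize differenceKernel x = C at *
  have one_le : 1 ≤ p.toReal := by simpa using ENNReal.toReal_mono hp (Fact.out : 1 ≤ p)
  have := holderTriple_two_mul p
  have schur {s : ℝ≥0∞} (hs : 1 ≤ s.toReal) : LpqBoundedBy s s (C ⊙ C) κ :=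
    lpqBoundedBy_of_row_sum_le_of_col_sum_le hs hκ
      (fun i => by simpa [← sq] using row i) (fun j => by simpa [← sq, kernel_symm _ j] using row j)
  have norm_mul (f g : ι → 𝕜) : ‖toLp p (f * g)‖ ≤ ‖toLp (2 * p) f‖ * ‖toLp (2 * p) g‖ :=
    norm_toLp_mul_le (zero_lt_one.trans_le Fact.out).ne' f g
  have diag : ‖toLp p ((C ⊙ C) *ᵥ (u * v))‖ ≤ κ * (‖toLp (2 * p) u‖ * ‖toLp (2 * p) v‖) :=
    (schur one_le _).trans (by gcongr; exact norm_mul u v)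
  have off_diag (f g : ι → 𝕜) :
      ‖toLp p (f * (C ⊙ C) *ᵥ g)‖ ≤ κ * (‖toLp (2 * p) f‖ * ‖toLp (2 * p) g‖) := calc
    _ ≤ ‖toLp (2 * p) f‖ * (κ * ‖toLp (2 * p) g‖) :=
      (norm_mul f _).trans <| mul_le_mul_of_nonneg_left
        (schur (by simp only [ENNReal.toReal_mul, ENNReal.toReal_ofNat]; linarith) g)
        (norm_toLp_nonneg _ f)
    _ = _ := by ring
  rw [cotlar, toLp_add, toLp_add, toLp_add]
  refine norm_add₄_le.trans ?_
  linarith [off_diag u v, off_diag v u]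

lemma LpqBoundedBy.differenceKernel_two_mul [Fintype ι] [RCLike 𝕜] {x : ι → 𝕜}
    (hx : x.Injective) {p : ℝ≥0∞} [Fact (1 ≤ p)] (hp : p ≠ ∞) {κ N : ℝ} (hκ : 0 ≤ κ) (hN : 0 ≤ N)
    (row : ∀ i, ∑ j, ‖differenceKernel x i j‖ ^ 2 ≤ κ)
    (h : LpqBoundedBy p p (differenceKernel x) N) :
    LpqBoundedBy (2 * p) (2 * p) (differenceKernel x) (2 * N + √(3 * κ)) := by
  intro v
  have hp₀ : 0 < p.toReal := ENNReal.toReal_pos (zero_lt_one.trans_le Fact.out).ne' hp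
  have cotlar := norm_differenceKernel_mulVec_mul_le hx hp hκ row v v
  generalize differenceKernel x = C at *
  have := holderTriple_two_mul p
  set a := ‖toLp (2 * p) v‖
  set b := ‖toLp (2 * p) (C *ᵥ v)‖
  have iterate : ‖toLp p (C *ᵥ (v * C *ᵥ v + v * C *ᵥ v))‖ ≤ N * (2 * (a * b)) := by
    refine (h _).trans ?_
    gcongr
    rw [← two_smul 𝕜, toLp_smul, norm_smul, RCLike.norm_two]
    gcongr
    exact norm_toLp_mul_le (zero_lt_one.trans_le Fact.out).ne' v _
  have quadratic : b ^ 2 ≤ N * (2 * (a * b)) + (√(3 * κ) * a) ^ 2 := by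
    rw [← norm_toLp_sq hp₀, mul_pow, Real.sq_sqrt (by positivity), sq, sq]
    exact cotlar.trans (by gcongr)
  have ha := mul_nonneg (Real.sqrt_nonneg (3 * κ)) (norm_toLp_nonneg (2 * p) v)
  have hNa := mul_nonneg hN (norm_toLp_nonneg (2 * p) v)
  rw [add_mul]
  by_contra! hlt
  nlinarith

/-- If `C v = μ I v` with `μ` and `C` real, then `v * star (C v) + star v * C v = 0`, so that only
the diagonal terms of Cotlar's identity for `v` and `star v` survive. -/
lemma norm_eigenvalue_differenceKernel_le [Fintype ι] {x : ι → ℝ} (hx : x.Injective) {κ : ℝ}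
    (hκ : 0 ≤ κ) (row : ∀ i, ∑ j, ‖differenceKernel x i j‖ ^ 2 ≤ κ) {v : ι → ℂ} (hv₀ : v ≠ 0)
    {μ : ℝ} (hv : differenceKernel (fun i => (x i : ℂ)) *ᵥ v = (μ * Complex.I) • v) :
    |μ| ≤ √(3 * κ) := by
  have hv_star : differenceKernel (fun i => (x i : ℂ)) *ᵥ star v = -(μ * Complex.I) • star v := by
    trans star (differenceKernel (fun i => (x i : ℂ)) *ᵥ v)
    · ext i
      simp [mulVec, dotProduct, differenceKernel]
    · rw [hv, star_smul]
      simp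
  have cancel : v * (-(μ * Complex.I) • star v) + star v * ((μ * Complex.I) • v) = 0 := by
    ext i
    simp only [Pi.add_apply, Pi.mul_apply, Pi.smul_apply, smul_eq_mul, Pi.zero_apply]
    ring
  have norm_sq : ‖toLp 1 (v * star v)‖ = ‖toLp (2 * 1) v‖ * ‖toLp (2 * 1) (star v)‖ := by
    have norm_star : ‖toLp 1 (v * star v)‖ = ‖toLp 1 (v ^ 2)‖ := by simp [norm_toLp_one, sq]
    have norm_star' : ‖toLp (2 * 1) (star v)‖ = ‖toLp (2 * 1) v‖ := by
      simp [PiLp.norm_eq_sum]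
    rw [norm_star, norm_toLp_sq (by simp), norm_star', sq]
  have norm_pos : 0 < ‖toLp 1 (v * star v)‖ := by
    rw [norm_pos_iff, Ne, toLp_eq_zero]
    simpa [funext_iff] using hv₀
  have cotlar := norm_differenceKernel_mulVec_mul_le (p := 1)
    (Complex.ofReal_injective.comp hx) ENNReal.one_ne_top hκ
    (fun i => by simpa [differenceKernel, ← Complex.ofReal_sub] using row i) v (star v)
  simp only [Function.comp_def, hv, hv_star] at cotlar
  rw [cancel, mulVec_zero, toLp_zero, norm_zero, zero_add, smul_mul_smul_comm, toLp_smul, norm_smul,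
    ← norm_sq] at cotlar
  refine Real.abs_le_sqrt (le_of_mul_le_mul_right (cotlar.trans_eq' ?_) norm_pos)
  simp [sq]

lemma lpqBoundedBy_two_differenceKernel [Fintype ι] {x : ι → ℝ} (hx : x.Injective) {κ : ℝ}
    (hκ : 0 ≤ κ) (row : ∀ i, ∑ j, ‖differenceKernel x i j‖ ^ 2 ≤ κ) :
    LpqBoundedBy 2 2 (differenceKernel fun i => (x i : ℂ)) √(3 * κ) := by
  classical
  set C := differenceKernel fun i => (x i : ℂ)
  have isHermitian : (Complex.I • C).IsHermitian := by
    ext i j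
    simp only [C, differenceKernel, conjTranspose_apply, Matrix.smul_apply, of_apply, smul_eq_mul,
      star_mul', RCLike.star_def, Complex.conj_I, star_inv₀, star_sub, Complex.conj_ofReal, neg_mul]
    rw [← mul_neg, ← inv_neg, neg_sub]
  have eigenvalues_le (i : ι) : |isHermitian.eigenvalues i| ≤ √(3 * κ) := by
    rw [← abs_neg]
    refine norm_eigenvalue_differenceKernel_le hx hκ row
      (v := ofLp (isHermitian.eigenvectorBasis i)) ?_ ?_
    · simpa using isHermitian.eigenvectorBasis.orthonormal.ne_zero i
    · apply smul_right_injective _ Complex.I_ne_zero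
      refine (smul_mulVec ..).symm.trans (isHermitian.mulVec_eigenvectorBasis i |>.trans ?_)
      ext j
      simp [← mul_assoc, mul_right_comm]
  intro v
  simpa [smul_mulVec, norm_smul] using
    lpqBoundedBy_two_of_abs_eigenvalues_le isHermitian (Real.sqrt_nonneg _) eigenvalues_le v

end DifferenceKernel

section RieszThorin

variable {ι κ : Type*} {p p₀ p₁ q q₀ q₁ : ℝ≥0∞} {α β θ : ℝ}

/-- The power `c ^ w` with the phase of `c` kept fixed: it has modulus `‖c‖ ^ w.re` when
`0 < w.re`, equals `c` at `w = 1`, and is entire in `w`. It vanishes at `c = 0` because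
`0 / 0 = 0`. -/
noncomputable def phaseCpow (c w : ℂ) : ℂ :=
  c / ‖c‖ * Complex.exp (w * Real.log ‖c‖)

lemma phaseCpow_one (c : ℂ) : phaseCpow c 1 = c := by
  rcases eq_or_ne c 0 with rfl | hc
  · simp [phaseCpow]
  · rw [phaseCpow, one_mul, ← Complex.ofReal_exp, Real.exp_log (norm_pos_iff.2 hc),
      div_mul_cancel₀ _ (by simpa using hc)]

lemma norm_phaseCpow_ofReal_re (c w : ℂ) : ‖phaseCpow c w.re‖ = ‖phaseCpow c w‖ := by
  simp [phaseCpow, Complex.norm_exp]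

lemma norm_phaseCpow (c : ℂ) {w : ℂ} (hw : 0 < w.re) : ‖phaseCpow c w‖ = ‖c‖ ^ w.re := by
  rcases eq_or_ne c 0 with rfl | hc
  · simp [phaseCpow, Real.zero_rpow hw.ne']
  · have hc' := norm_pos_iff.2 hc
    rw [phaseCpow, norm_mul, norm_div, Complex.norm_real, norm_norm, div_self hc'.ne', one_mul,
      Complex.norm_exp, Complex.re_mul_ofReal, Real.rpow_def_of_pos hc', mul_comm]

lemma differentiable_phaseCpow (c : ℂ) : Differentiable ℂ (phaseCpow c) := by
  unfold phaseCpow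
  fun_prop

/-- The analytic family `z ↦ v ^ ((1 - z) α + z β)` through `v`, used to interpolate along the strip
`0 ≤ re z ≤ 1`. -/
noncomputable def analyticFamily (α β : ℝ) (v : ι → ℂ) (z : ℂ) : ι → ℂ :=
  fun i => phaseCpow (v i) ((1 - z) * α + z * β)

lemma analyticFamily_div_eq_self {a b c : ℝ} (ha : 0 < a) (h : a⁻¹ = (1 - θ) * b⁻¹ + θ * c⁻¹)
    (v : ι → ℂ) : analyticFamily (a / b) (a / c) v θ = v := by
  have exponent : (1 - (θ : ℂ)) * (a / b : ℝ) + θ * (a / c : ℝ) = 1 := by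
    have : (1 - θ) * (a / b) + θ * (a / c) = 1 := calc
      _ = a * ((1 - θ) * b⁻¹ + θ * c⁻¹) := by ring
      _ = 1 := by rw [← h, mul_inv_cancel₀ ha.ne']
    exact_mod_cast this
  ext i
  rw [analyticFamily, exponent, phaseCpow_one]

lemma differentiable_analyticFamily (α β : ℝ) (v : ι → ℂ) :
    Differentiable ℂ (analyticFamily α β v) :=
  differentiable_pi.2 fun i => (differentiable_phaseCpow (v i)).comp (by fun_prop)

lemma norm_analyticFamily_ofReal_re (v : ι → ℂ) (z : ℂ) (i : ι) :
    ‖analyticFamily α β v z.re i‖ = ‖analyticFamily α β v z i‖ := by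
  rw [analyticFamily, analyticFamily, ← norm_phaseCpow_ofReal_re _ ((1 - z) * α + z * β)]
  simp

lemma norm_analyticFamily (v : ι → ℂ) {z : ℂ} (hz : 0 < (1 - z.re) * α + z.re * β) (i : ι) :
    ‖analyticFamily α β v z i‖ = ‖v i‖ ^ ((1 - z.re) * α + z.re * β) := by
  have re_exponent : ((1 - z) * α + z * β).re = (1 - z.re) * α + z.re * β := by simp
  rw [analyticFamily, norm_phaseCpow _ (by rwa [re_exponent]), re_exponent]

lemma norm_toLp_analyticFamily_of_re_eq_zero [Fintype ι] (hp : 0 < p.toReal) (hp₀ : 0 < p₀.toReal)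
    (v : ι → ℂ) {z : ℂ} (hz : z.re = 0) :
    ‖toLp p₀ (analyticFamily (p.toReal / p₀.toReal) β v z)‖ =
      ‖toLp p v‖ ^ (p.toReal / p₀.toReal) := by
  have hpos : 0 < p.toReal / p₀.toReal := div_pos hp hp₀
  refine norm_toLp_eq_rpow_of_norm_eq_rpow hp₀ hpos (div_mul_cancel₀ _ hp₀.ne').symm fun i => ?_
  rw [norm_analyticFamily _ (by simpa [hz] using hpos), hz]
  simp

lemma norm_toLp_analyticFamily_of_re_eq_one [Fintype ι] (hp : 0 < p.toReal) (hp₁ : 0 < p₁.toReal)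
    (v : ι → ℂ) {z : ℂ} (hz : z.re = 1) :
    ‖toLp p₁ (analyticFamily α (p.toReal / p₁.toReal) v z)‖ =
      ‖toLp p v‖ ^ (p.toReal / p₁.toReal) := by
  have hpos : 0 < p.toReal / p₁.toReal := div_pos hp hp₁
  refine norm_toLp_eq_rpow_of_norm_eq_rpow hp₁ hpos (div_mul_cancel₀ _ hp₁.ne').symm fun i => ?_
  rw [norm_analyticFamily _ (by simpa [hz] using hpos), hz]
  simp

lemma bddAbove_norm_dotProduct_mulVec_analyticFamily [Fintype ι] [Fintype κ]
    (A : Matrix κ ι ℂ) (g : κ → ℂ) (v : ι → ℂ) {γ δ : ℝ} :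
    BddAbove ((norm ∘ fun z => analyticFamily γ δ g z ⬝ᵥ A *ᵥ analyticFamily α β v z) ''
      Complex.HadamardThreeLines.verticalClosedStrip 0 1) := by
  let majorant (s : ℝ) : ℝ := ∑ i, ‖analyticFamily γ δ g s i‖ *
    ∑ j, ‖A i j‖ * ‖analyticFamily α β v s j‖
  have continuous_majorant : Continuous majorant := by
    have hg := (differentiable_analyticFamily γ δ g).continuous
    have hv := (differentiable_analyticFamily α β v).continuous
    fun_prop
  obtain ⟨M, hM⟩ := (isCompact_Icc (a := (0 : ℝ)) (b := 1)).bddAbove_image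
    continuous_majorant.continuousOn
  refine ⟨M, ?_⟩
  rintro _ ⟨z, hz, rfl⟩
  refine le_trans ?_ (hM ⟨z.re, hz, rfl⟩)
  simp only [majorant, norm_analyticFamily_ofReal_re]
  refine norm_sum_le_of_le _ fun i _ => (norm_mul_le _ _).trans ?_
  gcongr
  exact norm_sum_le_of_le _ fun j _ => norm_mul_le _ _

lemma rpow_div_rpow_mul_rpow_div_rpow {x a b c : ℝ} (hx : 0 ≤ x) (ha : 0 < a) (hb : 0 < b)
    (hc : 0 < c) (hθ : θ ∈ Set.Icc (0 : ℝ) 1) (h : a⁻¹ = (1 - θ) * b⁻¹ + θ * c⁻¹) :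
    (x ^ (a / b)) ^ (1 - θ) * (x ^ (a / c)) ^ θ = x := by
  have exponent : a / b * (1 - θ) + a / c * θ = 1 := calc
    _ = a * ((1 - θ) * b⁻¹ + θ * c⁻¹) := by ring
    _ = 1 := by rw [← h, mul_inv_cancel₀ ha.ne']
  rw [← Real.rpow_mul hx, ← Real.rpow_mul hx, ← Real.rpow_add_of_nonneg hx
    (mul_nonneg (by positivity) (sub_nonneg.2 hθ.2)) (mul_nonneg (by positivity) hθ.1),
    exponent, Real.rpow_one]

/-- The bilinear form of the Riesz–Thorin theorem. -/
lemma norm_dotProduct_mulVec_le_interpolate [Fintype ι] [Fintype κ] {A : Matrix κ ι ℂ} {M₀ M₁ : ℝ}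
    (hM₀ : 0 ≤ M₀) (hM₁ : 0 ≤ M₁) (hp : 0 < p.toReal) (hp₀ : 0 < p₀.toReal) (hp₁ : 0 < p₁.toReal)
    (hq : 0 < q.toReal) (hq₀ : 0 < q₀.toReal) (hq₁ : 0 < q₁.toReal) (hθ : θ ∈ Set.Icc (0 : ℝ) 1)
    (hpθ : p.toReal⁻¹ = (1 - θ) * p₀.toReal⁻¹ + θ * p₁.toReal⁻¹)
    (hqθ : q.toReal⁻¹ = (1 - θ) * q₀.toReal⁻¹ + θ * q₁.toReal⁻¹)
    (h₀ : ∀ g v, ‖g ⬝ᵥ A *ᵥ v‖ ≤ M₀ * (‖toLp q₀ g‖ * ‖toLp p₀ v‖))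
    (h₁ : ∀ g v, ‖g ⬝ᵥ A *ᵥ v‖ ≤ M₁ * (‖toLp q₁ g‖ * ‖toLp p₁ v‖)) (g : κ → ℂ) (v : ι → ℂ) :
    ‖g ⬝ᵥ A *ᵥ v‖ ≤ M₀ ^ (1 - θ) * M₁ ^ θ * (‖toLp q g‖ * ‖toLp p v‖) := by
  let G := analyticFamily (q.toReal / q₀.toReal) (q.toReal / q₁.toReal) g
  let V := analyticFamily (p.toReal / p₀.toReal) (p.toReal / p₁.toReal) v
  have norm_left (z : ℂ) (hz : z ∈ Complex.re ⁻¹' {0}) : ‖G z ⬝ᵥ A *ᵥ V z‖ ≤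
      M₀ * (‖toLp q g‖ ^ (q.toReal / q₀.toReal) * ‖toLp p v‖ ^ (p.toReal / p₀.toReal)) := by
    rw [← norm_toLp_analyticFamily_of_re_eq_zero hq hq₀ g hz,
      ← norm_toLp_analyticFamily_of_re_eq_zero hp hp₀ v hz]
    exact h₀ _ _
  have norm_right (z : ℂ) (hz : z ∈ Complex.re ⁻¹' {1}) : ‖G z ⬝ᵥ A *ᵥ V z‖ ≤
      M₁ * (‖toLp q g‖ ^ (q.toReal / q₁.toReal) * ‖toLp p v‖ ^ (p.toReal / p₁.toReal)) := by
    rw [← norm_toLp_analyticFamily_of_re_eq_one hq hq₁ g hz,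
      ← norm_toLp_analyticFamily_of_re_eq_one hp hp₁ v hz]
    exact h₁ _ _
  have differentiable : Differentiable ℂ fun z => G z ⬝ᵥ A *ᵥ V z := by
    have hG : ∀ i, Differentiable ℂ fun z => G z i :=
      differentiable_pi.1 (differentiable_analyticFamily _ _ g)
    have hV : ∀ j, Differentiable ℂ fun z => V z j :=
      differentiable_pi.1 (differentiable_analyticFamily _ _ v)
    simp only [dotProduct, mulVec]
    fun_prop
  have three_lines := Complex.HadamardThreeLines.norm_le_interp_of_mem_verticalClosedStrip₀₁'
    (fun z => G z ⬝ᵥ A *ᵥ V z) (z := θ) hθ differentiable.diffContOnCl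
    (bddAbove_norm_dotProduct_mulVec_analyticFamily A g v) norm_left norm_right
  have hg := norm_toLp_nonneg q g
  have hv := norm_toLp_nonneg p v
  simp only [G, V, analyticFamily_div_eq_self hp hpθ, analyticFamily_div_eq_self hq hqθ,
    Complex.ofReal_re] at three_lines
  rw [Real.mul_rpow hM₀ (by positivity), Real.mul_rpow hM₁ (by positivity),
    Real.mul_rpow (by positivity) (by positivity), Real.mul_rpow (by positivity) (by positivity)]
    at three_lines
  refine three_lines.trans_eq ?_
  nth_rewrite 3 [← rpow_div_rpow_mul_rpow_div_rpow hg hq hq₀ hq₁ hθ hqθ]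
  nth_rewrite 3 [← rpow_div_rpow_mul_rpow_div_rpow hv hp hp₀ hp₁ hθ hpθ]
  ring

/-- The Riesz–Thorin theorem for matrices. -/
lemma LpqBoundedBy.interpolate [Fintype ι] [Fintype κ] {A : Matrix κ ι ℂ} {M₀ M₁ : ℝ}
    (h₀ : LpqBoundedBy p₀ q₀ A M₀) (h₁ : LpqBoundedBy p₁ q₁ A M₁) (hM₀ : 0 ≤ M₀) (hM₁ : 0 ≤ M₁)
    (hp : 0 < p.toReal) (hp₀ : 0 < p₀.toReal) (hp₁ : 0 < p₁.toReal)
    (hq : 1 < q.toReal) (hq₀ : 1 < q₀.toReal) (hq₁ : 1 < q₁.toReal) (hθ : θ ∈ Set.Icc (0 : ℝ) 1)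
    (hpθ : p.toReal⁻¹ = (1 - θ) * p₀.toReal⁻¹ + θ * p₁.toReal⁻¹)
    (hqθ : q.toReal⁻¹ = (1 - θ) * q₀.toReal⁻¹ + θ * q₁.toReal⁻¹) :
    LpqBoundedBy p q A (M₀ ^ (1 - θ) * M₁ ^ θ) := by
  obtain ⟨q', conj, hq', inv_q'⟩ := exists_holderConjugate hq
  obtain ⟨q₀', conj₀, hq₀', inv_q₀'⟩ := exists_holderConjugate hq₀
  obtain ⟨q₁', conj₁, hq₁', inv_q₁'⟩ := exists_holderConjugate hq₁
  have hq'θ : q'.toReal⁻¹ = (1 - θ) * q₀'.toReal⁻¹ + θ * q₁'.toReal⁻¹ := by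
    rw [inv_q', inv_q₀', inv_q₁', hqθ]; ring
  intro v
  have hv := norm_toLp_nonneg p v
  have := conj.symm
  refine norm_toLp_le_of_forall_norm_dotProduct_le (q := q') (ne_top_of_one_lt_toReal hq)
    (ne_top_of_one_lt_toReal hq') (by positivity) fun g => ?_
  refine (norm_dotProduct_mulVec_le_interpolate hM₀ hM₁ hp hp₀ hp₁ (one_pos.trans hq')
    (one_pos.trans hq₀') (one_pos.trans hq₁') hθ hpθ hq'θ (h₀.norm_dotProduct_mulVec_le q₀')
    (h₁.norm_dotProduct_mulVec_le q₁') g v).trans_eq ?_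
  ring

end RieszThorin

section DiscreteHilbertTransform

variable {ι : Type*} [Fintype ι] {p q r : ℝ≥0∞}

lemma LpqBoundedBy.of_transpose_eq_neg {A : Matrix ι ι ℂ} (hA : Aᵀ = -A) {N : ℝ} (hN : 0 ≤ N)
    (hp : 1 < p.toReal) (h : LpqBoundedBy p p A N)
    (hr : r.toReal⁻¹ ∈ Set.Icc p.toReal⁻¹ (1 - p.toReal⁻¹)) : LpqBoundedBy r r A N := by
  obtain ⟨p', conj, hp', inv_p'⟩ := exists_holderConjugate hp
  have h' : LpqBoundedBy p' p' A N := fun v => by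
    have := conj.symm
    have : Fact (1 ≤ p') := ⟨ENNReal.HolderConjugate.one_le p' p⟩
    simpa [hA, neg_mulVec] using
      h.transpose (p' := p') (q' := p') hN (ne_top_of_one_lt_toReal hp)
        (ne_top_of_one_lt_toReal hp') v
  have inv_r_pos : 0 < r.toReal⁻¹ := (inv_pos.2 (one_pos.trans hp)).trans_le hr.1
  have hr₁ : 1 < r.toReal := by
    rw [← inv_lt_one₀ (inv_pos.1 inv_r_pos)]
    linarith [hr.2, inv_pos.2 (one_pos.trans hp)]
  obtain ⟨θ, hθ, inv_r⟩ : ∃ θ ∈ Set.Icc (0 : ℝ) 1,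
      p.toReal⁻¹ + θ • (p'.toReal⁻¹ - p.toReal⁻¹) = r.toReal⁻¹ := by
    rw [← inv_p'] at hr
    rwa [← segment_eq_Icc (hr.1.trans hr.2), segment_eq_image'] at hr
  have hrθ : r.toReal⁻¹ = (1 - θ) * p.toReal⁻¹ + θ * p'.toReal⁻¹ := by
    rw [← inv_r, smul_eq_mul]; ring
  have interpolated := h.interpolate h' hN hN (one_pos.trans hr₁) (one_pos.trans hp)
    (one_pos.trans hp') hr₁ hp hp' hθ hrθ hrθ
  rwa [← Real.rpow_add_of_nonneg hN (sub_nonneg.2 hθ.2) hθ.1, sub_add_cancel, Real.rpow_one]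
    at interpolated

lemma lpqBoundedBy_two_pow_differenceKernel {x : ι → ℝ} (hx : x.Injective) {κ : ℝ} (hκ : 0 ≤ κ)
    (row : ∀ i, ∑ j, ‖differenceKernel x i j‖ ^ 2 ≤ κ) (k : ℕ) :
    LpqBoundedBy (2 ^ (k + 1)) (2 ^ (k + 1)) (differenceKernel fun i => (x i : ℂ))
      ((2 ^ (k + 1) - 1) * √(3 * κ)) := by
  induction k with
  | zero =>
    simpa only [zero_add, pow_one, show (2 - 1 : ℝ) = 1 by norm_num, one_mul] using
      lpqBoundedBy_two_differenceKernel hx hκ row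
  | succ k ih =>
    have : Fact (1 ≤ (2 : ℝ≥0∞) ^ (k + 1)) := ⟨one_le_pow₀ one_le_two⟩
    have one_le : (1 : ℝ) ≤ 2 ^ (k + 1) := one_le_pow₀ one_le_two
    rw [pow_succ' (2 : ℝ≥0∞) (k + 1)]
    have doubled := ih.differenceKernel_two_mul (Complex.ofReal_injective.comp hx)
      (ENNReal.pow_ne_top ENNReal.ofNat_ne_top) hκ
      (mul_nonneg (sub_nonneg.2 one_le) (Real.sqrt_nonneg _))
      (fun i => by simpa [differenceKernel, ← Complex.ofReal_sub] using row i)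
    rwa [show 2 * ((2 ^ (k + 1) - 1) * √(3 * κ)) + √(3 * κ)
      = (2 ^ (k + 1 + 1) - 1) * √(3 * κ) by ring] at doubled

lemma summable_inv_intCast_sq : Summable fun m : ℤ => ((m : ℝ)⁻¹) ^ 2 := by
  simpa using Real.summable_one_div_int_pow.2 one_lt_two

lemma sum_norm_differenceKernel_intCast_sq_le {x : ι → ℤ} (hx : x.Injective) (i : ι) :
    ∑ j, ‖differenceKernel (fun i => (x i : ℝ)) i j‖ ^ 2 ≤ ∑' m : ℤ, ((m : ℝ)⁻¹) ^ 2 := by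
  have sub_injective : Function.Injective fun j => x i - x j := sub_right_injective.comp hx
  calc _ = ∑ m ∈ univ.map ⟨_, sub_injective⟩, ((m : ℝ)⁻¹) ^ 2 := by simp [differenceKernel]
    _ ≤ _ := summable_inv_intCast_sq.sum_le_tsum _ fun m _ => by positivity

lemma exists_forall_lpqBoundedBy_differenceKernel_intCast (hr : 1 < r.toReal) :
    ∃ N > 0, ∀ (ι : Type*) [Fintype ι] (x : ι → ℤ), x.Injective →
      LpqBoundedBy r r (differenceKernel fun i => (x i : ℂ)) N := by
  set κ := ∑' m : ℤ, ((m : ℝ)⁻¹) ^ 2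
  have hκ : 0 < κ := summable_inv_intCast_sq.tsum_pos (fun m => by positivity) 1 (by norm_num)
  have inv_r_pos : 0 < r.toReal⁻¹ := inv_pos.2 (one_pos.trans hr)
  have inv_r_lt : 0 < 1 - r.toReal⁻¹ := sub_pos.2 (inv_lt_one_of_one_lt₀ hr)
  obtain ⟨k, hk⟩ := exists_pow_lt_of_lt_one (lt_min inv_r_pos inv_r_lt)
    (inv_lt_one_of_one_lt₀ one_lt_two)
  have one_lt : (1 : ℝ) < 2 ^ (k + 1) := one_lt_pow₀ one_lt_two k.succ_ne_zero
  have hN : 0 < ((2 : ℝ) ^ (k + 1) - 1) * √(3 * κ) :=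
    mul_pos (sub_pos.2 one_lt) (by positivity)
  refine ⟨_, hN, fun ι _ x hx => ?_⟩
  have bound := lpqBoundedBy_two_pow_differenceKernel (Int.cast_injective.comp hx) hκ.le
    (sum_norm_differenceKernel_intCast_sq_le hx) k
  have inv_pow_lt : ((2 : ℝ) ^ (k + 1))⁻¹ < min r.toReal⁻¹ (1 - r.toReal⁻¹) := by
    refine hk.trans_le' ?_
    rw [← inv_pow]
    exact pow_le_pow_of_le_one (by positivity) (by norm_num) k.le_succ
  refine bound.of_transpose_eq_neg (differenceKernel_transpose _) hN.le (by simpa using one_lt) ?_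
  simp only [ENNReal.toReal_pow, ENNReal.toReal_ofNat]
  obtain ⟨lower, upper⟩ := lt_min_iff.1 inv_pow_lt
  exact ⟨lower.le, by linarith⟩

end DiscreteHilbertTransform

section LpqOpNorm

variable {n : ℕ} {p q : ℝ≥0∞} [Fact (1 ≤ p)] [Fact (1 ≤ q)] {A : Matrix (Fin n) (Fin n) ℂ}

lemma lpqOpNorm_le {M : ℝ} (hM : 0 ≤ M) (hA : LpqBoundedBy p q A M) : lpqOpNorm p q A ≤ M :=
  ContinuousLinearMap.opNorm_le_bound _ hM fun v => hA v.ofLp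

lemma lpqBoundedBy_lpqOpNorm : LpqBoundedBy p q A (lpqOpNorm p q A) := fun v =>
  ContinuousLinearMap.le_opNorm (LinearMap.toContinuousLinearMap
    (((WithLp.linearEquiv q ℂ (∀ _ : Fin n, ℂ)).symm.toLinearMap.comp A.mulVecLin).comp
      (WithLp.linearEquiv p ℂ (∀ _ : Fin n, ℂ)).toLinearMap)) (toLp p v)

lemma lpqOpNorm_pos (hA : A ≠ 0) : 0 < lpqOpNorm p q A := by
  contrapose! hA
  have mulVec_eq_zero (v : Fin n → ℂ) : A *ᵥ v = 0 := by
    have norm_le_zero := (lpqBoundedBy_lpqOpNorm v).trans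
      (mul_nonpos_of_nonpos_of_nonneg hA (norm_nonneg _))
    rwa [norm_le_zero_iff, toLp_eq_zero] at norm_le_zero
  exact ext_of_mulVec_single fun j => by simp only [mulVec_eq_zero, zero_mulVec]

end LpqOpNorm

section HilbertMatrix

variable {n : ℕ}

/-- The skew-symmetric Hilbert matrix `1 / (j - k)`; its diagonal vanishes because `0⁻¹ = 0`. -/
noncomputable def hilbertMatrix (n : ℕ) : Matrix (Fin n) (Fin n) ℂ :=
  of fun k j => ((j : ℂ) - k)⁻¹

/-- The triangular truncation `T_{Δ,n} A`: the entries of `A` on and above the diagonal. -/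
def triangularTruncation (A : Matrix (Fin n) (Fin n) ℂ) : Matrix (Fin n) (Fin n) ℂ :=
  of fun k j => if (k : ℕ) ≤ (j : ℕ) then A k j else 0

lemma hilbertMatrix_ne_zero (hn : 2 ≤ n) : hilbertMatrix n ≠ 0 := by
  intro h
  simpa [hilbertMatrix] using congr_fun₂ h ⟨0, by omega⟩ ⟨1, hn⟩

lemma exists_mem_Icc_one_lt_toReal {p q : ℝ≥0∞} (hqp : q ≤ p) (hp : 1 < p) (hq : q ≠ 0)
    (hq_top : q ≠ ∞) : ∃ r ∈ Set.Icc q p, 1 < r.toReal := by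
  have ne_top : q + 1 ≠ ∞ := ENNReal.add_ne_top.2 ⟨hq_top, ENNReal.one_ne_top⟩
  refine ⟨min p (q + 1), ⟨le_min hqp le_self_add, min_le_left _ _⟩, ?_⟩
  rw [← ENNReal.toReal_one, ENNReal.toReal_lt_toReal ENNReal.one_ne_top
    (ne_top_of_le_ne_top ne_top (min_le_right _ _))]
  exact lt_min hp (ENNReal.lt_add_right ENNReal.one_ne_top hq |>.trans_eq (add_comm _ _))

lemma exists_lpqOpNorm_hilbertMatrix_le {p q : ℝ≥0∞} [Fact (1 ≤ p)] [Fact (1 ≤ q)] (hqp : q ≤ p)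
    (hp : p ≠ 1) (hq : q ≠ ∞) : ∃ N > 0, ∀ n : ℕ, 0 < n →
      lpqOpNorm p q (hilbertMatrix n) ≤ N * (n : ℝ) ^ (q.toReal⁻¹ - p.toReal⁻¹) := by
  have hq₀ : q ≠ 0 := (zero_lt_one.trans_le Fact.out).ne'
  obtain ⟨r, ⟨hqr, hrp⟩, hr⟩ := exists_mem_Icc_one_lt_toReal hqp
    (lt_of_le_of_ne Fact.out hp.symm) hq₀ hq
  obtain ⟨N, hN, hilbert⟩ := exists_forall_lpqBoundedBy_differenceKernel_intCast hr
  refine ⟨N, hN, fun n hn => lpqOpNorm_le (by positivity) ?_⟩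
  have eq_kernel : hilbertMatrix n = differenceKernel fun k : Fin n => ((-k : ℤ) : ℂ) := by
    ext k j
    simp [hilbertMatrix, differenceKernel, neg_add_eq_sub]
  have bound := (hilbert (Fin n) (fun k => -k) fun k j hkj => by simpa [Fin.ext_iff] using hkj)
    |>.mono_exponent hN.le (hq₀.bot_lt.trans_le hqr).ne' hrp hq₀ hqr
  rw [eq_kernel]
  convert bound using 1
  rw [Fintype.card_fin, mul_left_comm, ← Real.rpow_add (by exact_mod_cast hn),
    sub_add_sub_cancel]

lemma triangularTruncation_hilbertMatrix_mulVec_one (k : Fin n) :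
    (triangularTruncation (hilbertMatrix n) *ᵥ 1) k = (harmonic k.rev : ℂ) := by
  have row : (triangularTruncation (hilbertMatrix n) *ᵥ 1) k
      = ∑ j ∈ range n, if (k : ℕ) ≤ j then ((j : ℂ) - (k : ℕ))⁻¹ else 0 := by
    rw [← Fin.sum_univ_eq_sum_range]
    simp [triangularTruncation, hilbertMatrix, mulVec, dotProduct]
  have range_eq : range n = range (k + (k.rev + 1)) := by rw [Fin.val_rev]; congr; omega
  rw [row, range_eq, sum_range_add, sum_range_succ']
  have below_diagonal : ∑ j ∈ range k, (if (k : ℕ) ≤ j then ((j : ℂ) - (k : ℕ))⁻¹ else 0) = 0 :=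
    sum_eq_zero fun j hj => if_neg (mem_range.1 hj).not_ge
  rw [below_diagonal]
  simp [harmonic]

lemma half_mul_log_le_sum_log_succ (n : ℕ) :
    n * Real.log n / 2 ≤ ∑ k : Fin n, Real.log ((k : ℕ) + 1) := by
  have pair (k : Fin n) : Real.log n ≤ Real.log ((k : ℕ) + 1) + Real.log ((k.rev : ℕ) + 1) := by
    have n_eq : (n : ℝ) = k + k.rev + 1 := by exact_mod_cast (by rw [Fin.val_rev]; omega)
    rw [← Real.log_mul (by positivity) (by positivity)]
    refine Real.log_le_log (by exact_mod_cast k.pos) ?_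
    rw [n_eq]
    nlinarith [mul_nonneg (Nat.cast_nonneg (α := ℝ) k) (Nat.cast_nonneg k.rev)]
  have sum_pair := sum_le_sum fun k (_ : k ∈ univ) => pair k
  have sum_rev := Equiv.sum_comp Fin.revPerm fun k : Fin n => Real.log ((k : ℕ) + 1)
  simp only [Fin.revPerm_apply] at sum_rev
  rw [sum_const, card_fin, nsmul_eq_mul, sum_add_distrib, sum_rev] at sum_pair
  linarith

lemma half_mul_log_le_norm_triangularTruncation_mulVec_one (n : ℕ) :
    n * Real.log n / 2 ≤ ‖toLp 1 (triangularTruncation (hilbertMatrix n) *ᵥ 1)‖ := by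
  have log_le (k : Fin n) : Real.log ((k : ℕ) + 1) ≤ ‖(harmonic k : ℂ)‖ := by
    rw [← Complex.ofReal_ratCast, Complex.norm_real]
    refine le_trans ?_ (Real.le_norm_self _)
    exact_mod_cast log_add_one_le_harmonic k
  calc n * Real.log n / 2 ≤ ∑ k : Fin n, ‖(harmonic k : ℂ)‖ :=
        (half_mul_log_le_sum_log_succ n).trans (sum_le_sum fun k _ => log_le k)
    _ = ∑ k : Fin n, ‖(harmonic k.rev : ℂ)‖ :=
        (Equiv.sum_comp Fin.revPerm fun k : Fin n => ‖(harmonic k : ℂ)‖).symm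
    _ = _ := by simp only [norm_toLp_one, triangularTruncation_hilbertMatrix_mulVec_one]

lemma half_log_mul_rpow_le_lpqOpNorm_triangularTruncation {p q : ℝ≥0∞}
    [Fact (1 ≤ p)] [Fact (1 ≤ q)] (hn : 0 < n) :
    Real.log n / 2 * (n : ℝ) ^ (q.toReal⁻¹ - p.toReal⁻¹) ≤
      lpqOpNorm p q (triangularTruncation (hilbertMatrix n)) := by
  set T := triangularTruncation (hilbertMatrix n)
  have hn₀ : (0 : ℝ) < n := by exact_mod_cast hn
  have : Nonempty (Fin n) := ⟨⟨0, hn⟩⟩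
  have norm_one : ‖toLp p (1 : Fin n → ℂ)‖ = (n : ℝ) ^ p.toReal⁻¹ := by
    refine (PiLp.norm_toLp_const' (1 : ℂ)).trans ?_
    simp
  have nesting : ‖toLp 1 (T *ᵥ 1)‖ ≤ (n : ℝ) ^ (1 - q.toReal⁻¹) * ‖toLp q (T *ᵥ 1)‖ := by
    simpa using norm_toLp_le_card_rpow_mul_norm_toLp one_ne_zero (Fact.out : 1 ≤ q) (T *ᵥ 1)
  have exponent : (n : ℝ) ^ (q.toReal⁻¹ - p.toReal⁻¹)
      * ((n : ℝ) ^ (1 - q.toReal⁻¹) * (n : ℝ) ^ p.toReal⁻¹) = n := by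
    rw [← Real.rpow_add hn₀, ← Real.rpow_add hn₀]
    ring_nf
    exact Real.rpow_one _
  refine le_of_mul_le_mul_right ?_
    (by positivity : 0 < (n : ℝ) ^ (1 - q.toReal⁻¹) * (n : ℝ) ^ p.toReal⁻¹)
  calc _ = n * Real.log n / 2 := by rw [mul_assoc, exponent]; ring
    _ ≤ (n : ℝ) ^ (1 - q.toReal⁻¹) * ‖toLp q (T *ᵥ 1)‖ :=
        (half_mul_log_le_norm_triangularTruncation_mulVec_one n).trans nesting
    _ ≤ (n : ℝ) ^ (1 - q.toReal⁻¹) * (lpqOpNorm p q T * (n : ℝ) ^ p.toReal⁻¹) := by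
        gcongr
        exact norm_one ▸ lpqBoundedBy_lpqOpNorm (p := p) 1
    _ = _ := by ring

end HilbertMatrix

end TriangularTruncation

open TriangularTruncation

/-- For `1 ≠ p ≥ q ≠ ∞` there is a constant `C > 0` such that for each `n` the norm of the
triangular truncation operator `T_{Δ,n}` on `L(ℓ_p, ℓ_q)` (keeping the entries `s_{kj}` with
`k ≤ j ≤ n`) is at least `C ln n`: there is a matrix `S ≠ 0` with
`‖T_{Δ,n}(S)‖_{p→q} ≥ C ln n ‖S‖_{p→q}`. -/
theorem stmt_16 (p q : ℝ≥0∞) [Fact (1 ≤ p)] [Fact (1 ≤ q)]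
    (hqp : q ≤ p) (hp : p ≠ 1) (hq : q ≠ ∞) :
    ∃ C : ℝ, 0 < C ∧ ∀ n : ℕ, 1 ≤ n →
      ∃ S : Matrix (Fin n) (Fin n) ℂ, 0 < lpqOpNorm p q S ∧
        C * Real.log n * lpqOpNorm p q S ≤
          lpqOpNorm p q
            (Matrix.of fun k j : Fin n => if (k : ℕ) ≤ (j : ℕ) then S k j else 0) := by
  obtain ⟨N, hN, hilbert⟩ := exists_lpqOpNorm_hilbertMatrix_le hqp hp hq
  refine ⟨1 / (2 * N), by positivity, fun n hn => ?_⟩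
  rcases hn.eq_or_lt with rfl | hn₂
  · exact ⟨1, lpqOpNorm_pos one_ne_zero, by simp [lpqOpNorm]⟩
  refine ⟨hilbertMatrix n, lpqOpNorm_pos (hilbertMatrix_ne_zero hn₂), ?_⟩
  calc 1 / (2 * N) * Real.log n * lpqOpNorm p q (hilbertMatrix n)
      ≤ 1 / (2 * N) * Real.log n * (N * (n : ℝ) ^ (q.toReal⁻¹ - p.toReal⁻¹)) := by
        gcongr
        exact hilbert n hn
    _ = Real.log n / 2 * (n : ℝ) ^ (q.toReal⁻¹ - p.toReal⁻¹) := by field_simp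
    _ ≤ _ := half_log_mul_rpow_le_lpqOpNorm_triangularTruncation hn
end
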